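/- (Effective stress of the relaxed dual-phase energy is the volume average of the phase stresses.) Let C_1, C_2 be stiffness tensors (self-adjoint linear maps on d×d matrices, mapping every A to the symmetric matrix C_i(Aˢʸᵐ), positive definite on nonzero symmetric matrices), ε_1^B, ε_2^B symmetric matrices, φ ∈ (0,1), n̂ ∈ ℝ^d a unit vector, and ψ_i(ε) = ½⟨ε − ε_i^B, C_i(ε − ε_i^B)⟩. Define the relaxed energy ψ^{rel}(ε) = inf_{a ∈ ℝ^d} [φ ψ_1(ε − (1−φ)(a ⊗ n̂)ˢʸᵐ) + (1−φ) ψ_2(ε + φ (a ⊗ n̂)ˢʸᵐ)]. Then for each symmetric ε the infimum is attained at a unique a*(ε), the function ψ^{rel} is differentiable in ε, and its gradient equals the volume-averaged stress: Dψ^{rel}(ε) = φ σ_1 + (1−φ) σ_2, where σ_1 = C_1(ε_1 − ε_1^B), σ_2 = C_2(ε_2 − ε_2^B) with ε_1 = ε − (1−φ)(a*(ε) ⊗ n̂)ˢʸᵐ and ε_2 = ε + φ (a*(ε) ⊗ n̂)ˢʸᵐ. -/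

import Mathlib

open Matrix

attribute [local instance] Matrix.normedAddCommGroup Matrix.normedSpace

/-- The Frobenius inner product `⟨A, B⟩ = tr (A Bᵀ)`. -/
noncomputable def frob {d : ℕ} (A B : Matrix (Fin d) (Fin d) ℝ) : ℝ := (A * Bᵀ).trace

/-- The symmetric part `Aˢʸᵐ = (A + Aᵀ)/2`. -/
noncomputable def symPart {d : ℕ} (A : Matrix (Fin d) (Fin d) ℝ) :
    Matrix (Fin d) (Fin d) ℝ := (1 / 2 : ℝ) • (A + Aᵀ)

/-- A stiffness tensor: self-adjoint for the Frobenius inner product, `C A = C(Aˢʸᵐ)`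
symmetric for every `A`, and positive definite on nonzero symmetric matrices. -/
def IsStiffness {d : ℕ}
    (C : Matrix (Fin d) (Fin d) ℝ →ₗ[ℝ] Matrix (Fin d) (Fin d) ℝ) : Prop :=
  (∀ A B, frob (C A) B = frob A (C B)) ∧
  (∀ A, C A = C (symPart A)) ∧
  (∀ A, (C A)ᵀ = C A) ∧
  (∀ S : Matrix (Fin d) (Fin d) ℝ, Sᵀ = S → S ≠ 0 → 0 < frob S (C S))

/-- The dual-phase energy before relaxation:
`φ ψ₁(ε − (1−φ)(a ⊗ n̂)ˢʸᵐ) + (1−φ) ψ₂(ε + φ (a ⊗ n̂)ˢʸᵐ)` with Hooke energies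
`ψ_i(ε) = ½⟨ε − ε_i^B, C_i(ε − ε_i^B)⟩`. -/
noncomputable def dualE {d : ℕ}
    (C₁ C₂ : Matrix (Fin d) (Fin d) ℝ →ₗ[ℝ] Matrix (Fin d) (Fin d) ℝ)
    (ε₁B ε₂B : Matrix (Fin d) (Fin d) ℝ) (φ : ℝ) (nh : Fin d → ℝ)
    (ε : Matrix (Fin d) (Fin d) ℝ) (a : Fin d → ℝ) : ℝ :=
  φ * ((1 / 2) * frob (ε - (1 - φ) • symPart (vecMulVec a nh) - ε₁B)
        (C₁ (ε - (1 - φ) • symPart (vecMulVec a nh) - ε₁B)))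
    + (1 - φ) * ((1 / 2) * frob (ε + φ • symPart (vecMulVec a nh) - ε₂B)
        (C₂ (ε + φ • symPart (vecMulVec a nh) - ε₂B)))

/-- The partial rank-one relaxed dual-phase energy `ψ^{rel}(ε) = inf_a dualE(ε, a)`. -/
noncomputable def relaxedEnergy {d : ℕ}
    (C₁ C₂ : Matrix (Fin d) (Fin d) ℝ →ₗ[ℝ] Matrix (Fin d) (Fin d) ℝ)
    (ε₁B ε₂B : Matrix (Fin d) (Fin d) ℝ) (φ : ℝ) (nh : Fin d → ℝ)
    (ε : Matrix (Fin d) (Fin d) ℝ) : ℝ :=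
  ⨅ a : Fin d → ℝ, dualE C₁ C₂ ε₁B ε₂B φ nh ε a

/-!
At a jump vector `a` for which the phase tractions `σᵢ n̂` agree, the first variation of the
unrelaxed energy in `a` vanishes, so the energy of `(ε + H, b)` equals that of `(ε, a)` plus
`⟨φ σ₁ + (1 - φ) σ₂, H⟩` plus a nonnegative quadratic form, which is positive when `H = 0` and
`b ≠ a`. Hence `a` is the unique minimizer at `ε`, and the relaxed energy lies between an affine
function and the unrelaxed energy at fixed `a`, which touch at `ε` with the same derivative.
Traction continuity is a linear equation for `a`, solvable because its matrix, the acoustic tensor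
of the stiffness `(1 - φ) C₁ + φ C₂`, is positive definite.
-/

theorem hasFDerivAt_iInf_of_affine_le {E ι : Type*} [NormedAddCommGroup E] [NormedSpace ℝ E]
    {f : E → ι → ℝ} {x : E} {i₀ : ι} {L : E →L[ℝ] ℝ}
    (affine_le : ∀ h i, f x i₀ + L h ≤ f (x + h) i) (hL : HasFDerivAt (fun y => f y i₀) L x) :
    HasFDerivAt (fun y => ⨅ i, f y i) L x := by
  have : Nonempty ι := ⟨i₀⟩
  have lower (h : E) : f x i₀ + L h ≤ ⨅ i, f (x + h) i := le_ciInf (affine_le h)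
  have upper (h : E) : ⨅ i, f (x + h) i ≤ f (x + h) i₀ :=
    ciInf_le ⟨_, Set.forall_mem_range.2 (affine_le h)⟩ i₀
  have value : ⨅ i, f x i = f x i₀ :=
    le_antisymm (by simpa using upper 0) (by simpa using lower 0)
  rw [hasFDerivAt_iff_isLittleO_nhds_zero] at hL ⊢
  refine (Asymptotics.isBigO_of_le _ fun h => ?_).trans_isLittleO hL
  rw [value, Real.norm_of_nonneg (by linarith [lower h])]
  exact (by linarith [upper h] : _ ≤ _).trans (Real.le_norm_self _)

section Frobenius

variable {d : ℕ} {A : Matrix (Fin d) (Fin d) ℝ}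

theorem frob_comm (A B : Matrix (Fin d) (Fin d) ℝ) : frob A B = frob B A := by
  rw [frob, frob, ← trace_transpose, transpose_mul, transpose_transpose]

theorem frob_add_left (A B D : Matrix (Fin d) (Fin d) ℝ) :
    frob (A + B) D = frob A D + frob B D := by
  simp only [frob, Matrix.add_mul, trace_add]

theorem frob_smul_left (c : ℝ) (A B : Matrix (Fin d) (Fin d) ℝ) :
    frob (c • A) B = c * frob A B := by
  simp only [frob, smul_mul, trace_smul, smul_eq_mul]

theorem frob_add_right (A B D : Matrix (Fin d) (Fin d) ℝ) :
    frob A (B + D) = frob A B + frob A D := by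
  simp only [frob_comm A, frob_add_left]

theorem frob_smul_right (c : ℝ) (A B : Matrix (Fin d) (Fin d) ℝ) :
    frob A (c • B) = c * frob A B := by
  simp only [frob_comm A, frob_smul_left]

/-- The Frobenius inner product as a continuous bilinear form, so that `frobCLM d A` is the
functional represented by the matrix `A`. -/
noncomputable def frobCLM (d : ℕ) :
    Matrix (Fin d) (Fin d) ℝ →L[ℝ] Matrix (Fin d) (Fin d) ℝ →L[ℝ] ℝ :=
  LinearMap.toContinuousBilinearMap
    (LinearMap.mk₂ ℝ frob frob_add_left frob_smul_left frob_add_right frob_smul_right)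

theorem frobCLM_apply (A B : Matrix (Fin d) (Fin d) ℝ) : frobCLM d A B = frob A B := rfl

theorem transpose_symPart (A : Matrix (Fin d) (Fin d) ℝ) : (symPart A)ᵀ = symPart A := by
  simp only [symPart, transpose_smul, transpose_add, transpose_transpose, add_comm]

theorem symPart_add (A B : Matrix (Fin d) (Fin d) ℝ) :
    symPart (A + B) = symPart A + symPart B := by
  simp only [symPart, transpose_add]
  module

theorem frob_symPart (hA : Aᵀ = A) (B : Matrix (Fin d) (Fin d) ℝ) :
    frob A (symPart B) = frob A B := by
  have frob_transpose : frob A Bᵀ = frob A B := by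
    rw [frob, frob, transpose_transpose, ← trace_transpose, transpose_mul, hA, trace_mul_comm]
  rw [symPart, frob_smul_right, frob_add_right, frob_transpose]
  ring

theorem frob_vecMulVec (A : Matrix (Fin d) (Fin d) ℝ) (a n : Fin d → ℝ) :
    frob A (vecMulVec a n) = (A *ᵥ n) ⬝ᵥ a := by
  rw [frob, transpose_vecMulVec, mul_vecMulVec, trace_vecMulVec]

theorem symPart_vecMulVec_ne_zero {a n : Fin d → ℝ} (hn : n ≠ 0) (ha : a ≠ 0) :
    symPart (vecMulVec a n) ≠ 0 := by
  intro h
  have entry (i j : Fin d) : a i * n j + a j * n i = 0 := by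
    simpa [symPart, vecMulVec_apply, mul_comm (n i)] using congrFun₂ h i j
  obtain ⟨j, hj : n j ≠ 0⟩ := Function.ne_iff.1 hn
  have ha_j : a j = 0 := by simpa [← two_mul, hj] using entry j j
  exact ha (funext fun i => by simpa [ha_j, hj] using entry i j)

end Frobenius

section Stiffness

variable {d : ℕ} {C C₁ C₂ : Matrix (Fin d) (Fin d) ℝ →ₗ[ℝ] Matrix (Fin d) (Fin d) ℝ}

theorem IsStiffness.frob_map_left (hC : IsStiffness C) (A B : Matrix (Fin d) (Fin d) ℝ) :
    frob (C A) B = frob A (C B) := hC.1 A B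

theorem IsStiffness.map_symPart (hC : IsStiffness C) (A : Matrix (Fin d) (Fin d) ℝ) :
    C (symPart A) = C A := (hC.2.1 A).symm

theorem IsStiffness.transpose_map (hC : IsStiffness C) (A : Matrix (Fin d) (Fin d) ℝ) :
    (C A)ᵀ = C A := hC.2.2.1 A

theorem IsStiffness.frob_map_self_pos_of_transpose_eq (hC : IsStiffness C)
    {S : Matrix (Fin d) (Fin d) ℝ} (hS : Sᵀ = S) (hne : S ≠ 0) : 0 < frob S (C S) :=
  hC.2.2.2 S hS hne

theorem IsStiffness.frob_map_self_pos (hC : IsStiffness C) {A : Matrix (Fin d) (Fin d) ℝ}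
    (hA : symPart A ≠ 0) : 0 < frob A (C A) := by
  calc 0 < frob (symPart A) (C (symPart A)) :=
      hC.frob_map_self_pos_of_transpose_eq (transpose_symPart A) hA
    _ = frob A (C A) := by
      rw [hC.map_symPart, frob_comm, frob_symPart (hC.transpose_map A), frob_comm]

theorem IsStiffness.frob_map_self_nonneg (hC : IsStiffness C) (A : Matrix (Fin d) (Fin d) ℝ) :
    0 ≤ frob A (C A) := by
  by_cases hA : symPart A = 0
  · rw [← hC.map_symPart, hA, map_zero, frob, transpose_zero, Matrix.mul_zero, trace_zero]
  · exact (hC.frob_map_self_pos hA).le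

theorem IsStiffness.add (hC₁ : IsStiffness C₁) (hC₂ : IsStiffness C₂) :
    IsStiffness (C₁ + C₂) := by
  simp only [IsStiffness, LinearMap.add_apply, frob_add_left, frob_add_right, transpose_add,
    hC₁.frob_map_left, hC₂.frob_map_left, hC₁.map_symPart, hC₂.map_symPart,
    hC₁.transpose_map, hC₂.transpose_map, implies_true, true_and]
  exact fun S hS hne => add_pos (hC₁.frob_map_self_pos_of_transpose_eq hS hne)
    (hC₂.frob_map_self_pos_of_transpose_eq hS hne)

theorem IsStiffness.smul (hC : IsStiffness C) {c : ℝ} (hc : 0 < c) : IsStiffness (c • C) := by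
  simp only [IsStiffness, LinearMap.smul_apply, frob_smul_left, frob_smul_right, transpose_smul,
    hC.frob_map_left, hC.map_symPart, hC.transpose_map, implies_true, true_and]
  exact fun S hS hne => mul_pos hc (hC.frob_map_self_pos_of_transpose_eq hS hne)

/-- The acoustic (Christoffel) tensor `a ↦ C(a ⊗ n) n` of `C` in direction `n`: the traction on a
plane with normal `n` caused by the rank-one deformation `a ⊗ n`. -/
def acousticTensor (C : Matrix (Fin d) (Fin d) ℝ →ₗ[ℝ] Matrix (Fin d) (Fin d) ℝ)
    (n : Fin d → ℝ) : (Fin d → ℝ) →ₗ[ℝ] (Fin d → ℝ) :=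
  (mulVecBilin ℝ ℝ).flip n ∘ₗ C ∘ₗ (vecMulVecBilin ℝ ℝ).flip n

theorem acousticTensor_apply (C : Matrix (Fin d) (Fin d) ℝ →ₗ[ℝ] Matrix (Fin d) (Fin d) ℝ)
    (n a : Fin d → ℝ) : acousticTensor C n a = C (vecMulVec a n) *ᵥ n := rfl

theorem IsStiffness.acousticTensor_dotProduct_pos (hC : IsStiffness C) {n a : Fin d → ℝ}
    (hn : n ≠ 0) (ha : a ≠ 0) : 0 < acousticTensor C n a ⬝ᵥ a := by
  rw [acousticTensor_apply, ← frob_vecMulVec, frob_comm]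
  exact hC.frob_map_self_pos (symPart_vecMulVec_ne_zero hn ha)

theorem IsStiffness.acousticTensor_surjective (hC : IsStiffness C) {n : Fin d → ℝ}
    (hn : n ≠ 0) : Function.Surjective (acousticTensor C n) := by
  rw [← LinearMap.injective_iff_surjective, injective_iff_map_eq_zero]
  intro a hQa
  by_contra ha
  simpa [hQa] using hC.acousticTensor_dotProduct_pos hn ha

end Stiffness

section HookeEnergy

variable {d : ℕ} {C : Matrix (Fin d) (Fin d) ℝ →ₗ[ℝ] Matrix (Fin d) (Fin d) ℝ}

/-- The elastic energy `½⟨ε - εB, C(ε - εB)⟩` of a single phase with stiffness `C` and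
eigenstrain `εB`. -/
noncomputable def hookeEnergy (C : Matrix (Fin d) (Fin d) ℝ →ₗ[ℝ] Matrix (Fin d) (Fin d) ℝ)
    (εB ε : Matrix (Fin d) (Fin d) ℝ) : ℝ :=
  (1 / 2) * frob (ε - εB) (C (ε - εB))

theorem hookeEnergy_add (hC : IsStiffness C) (εB ε H : Matrix (Fin d) (Fin d) ℝ) :
    hookeEnergy C εB (ε + H)
      = hookeEnergy C εB ε + frob (C (ε - εB)) H + (1 / 2) * frob H (C H) := by
  have cross : frob (ε - εB) (C H) = frob (C (ε - εB)) H := (hC.frob_map_left _ _).symm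
  rw [hookeEnergy, hookeEnergy, add_sub_right_comm, map_add, frob_add_left, frob_add_right,
    frob_add_right, cross, frob_comm H (C (ε - εB))]
  ring

theorem hookeEnergy_zero (C : Matrix (Fin d) (Fin d) ℝ →ₗ[ℝ] Matrix (Fin d) (Fin d) ℝ)
    (ε : Matrix (Fin d) (Fin d) ℝ) : hookeEnergy C 0 ε = (1 / 2) * frob ε (C ε) := by
  rw [hookeEnergy, sub_zero]

theorem hookeEnergy_nonneg (hC : IsStiffness C) (εB ε : Matrix (Fin d) (Fin d) ℝ) :
    0 ≤ hookeEnergy C εB ε :=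
  mul_nonneg one_half_pos.le (hC.frob_map_self_nonneg _)

theorem hasFDerivAt_hookeEnergy (hC : IsStiffness C) (εB ε : Matrix (Fin d) (Fin d) ℝ) :
    HasFDerivAt (hookeEnergy C εB) (frobCLM d (C (ε - εB))) ε := by
  have hdiff : HasFDerivAt (fun ε' => ε' - εB) (.id ℝ _) ε := (hasFDerivAt_id ε).sub_const εB
  have hstress : HasFDerivAt (fun ε' => C (ε' - εB)) (LinearMap.toContinuousLinearMap C) ε :=
    (LinearMap.toContinuousLinearMap C).hasFDerivAt.comp ε hdiff
  refine (((frobCLM d).hasFDerivAt_of_bilinear hdiff hstress).const_mul (1 / 2)).congr_fderiv ?_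
  ext H
  change (1 / 2) * (frob (ε - εB) (C H) + frob H (C (ε - εB))) = frob (C (ε - εB)) H
  rw [← hC.frob_map_left, frob_comm H]
  ring

end HookeEnergy

section DualPhase

variable {d : ℕ} {C₁ C₂ : Matrix (Fin d) (Fin d) ℝ →ₗ[ℝ] Matrix (Fin d) (Fin d) ℝ}
  {ε₁B ε₂B ε : Matrix (Fin d) (Fin d) ℝ} {φ : ℝ} {n a : Fin d → ℝ}

/-- Continuity of the traction, `σ₁ n = σ₂ n`, across an interface with normal `n`, when the mean
strain is `ε` and the jump vector is `a`. -/
def TractionContinuous (C₁ C₂ : Matrix (Fin d) (Fin d) ℝ →ₗ[ℝ] Matrix (Fin d) (Fin d) ℝ)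
    (ε₁B ε₂B : Matrix (Fin d) (Fin d) ℝ) (φ : ℝ) (n : Fin d → ℝ)
    (ε : Matrix (Fin d) (Fin d) ℝ) (a : Fin d → ℝ) : Prop :=
  C₁ (ε - (1 - φ) • symPart (vecMulVec a n) - ε₁B) *ᵥ n
    = C₂ (ε + φ • symPart (vecMulVec a n) - ε₂B) *ᵥ n

/-- The volume average `φ σ₁ + (1 - φ) σ₂` of the phase stresses, when the mean strain is `ε` and
the jump vector is `a`. -/
noncomputable def averageStress (C₁ C₂ : Matrix (Fin d) (Fin d) ℝ →ₗ[ℝ] Matrix (Fin d) (Fin d) ℝ)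
    (ε₁B ε₂B : Matrix (Fin d) (Fin d) ℝ) (φ : ℝ) (n : Fin d → ℝ)
    (ε : Matrix (Fin d) (Fin d) ℝ) (a : Fin d → ℝ) : Matrix (Fin d) (Fin d) ℝ :=
  φ • C₁ (ε - (1 - φ) • symPart (vecMulVec a n) - ε₁B)
    + (1 - φ) • C₂ (ε + φ • symPart (vecMulVec a n) - ε₂B)

theorem dualE_eq_hookeEnergy (C₁ C₂ : Matrix (Fin d) (Fin d) ℝ →ₗ[ℝ] Matrix (Fin d) (Fin d) ℝ)
    (ε₁B ε₂B : Matrix (Fin d) (Fin d) ℝ) (φ : ℝ) (n : Fin d → ℝ)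
    (ε : Matrix (Fin d) (Fin d) ℝ) (a : Fin d → ℝ) :
    dualE C₁ C₂ ε₁B ε₂B φ n ε a
      = φ * hookeEnergy C₁ ε₁B (ε - (1 - φ) • symPart (vecMulVec a n))
        + (1 - φ) * hookeEnergy C₂ ε₂B (ε + φ • symPart (vecMulVec a n)) := rfl

theorem exists_tractionContinuous (hC₁ : IsStiffness C₁) (hC₂ : IsStiffness C₂)
    (ε₁B ε₂B : Matrix (Fin d) (Fin d) ℝ) (hφ : φ ∈ Set.Ioo (0 : ℝ) 1) (hn : n ≠ 0)
    (ε : Matrix (Fin d) (Fin d) ℝ) : ∃ a, TractionContinuous C₁ C₂ ε₁B ε₂B φ n ε a := by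
  have hmix : IsStiffness ((1 - φ) • C₁ + φ • C₂) :=
    (hC₁.smul (sub_pos.2 hφ.2)).add (hC₂.smul hφ.1)
  obtain ⟨a, ha⟩ := hmix.acousticTensor_surjective hn ((C₁ (ε - ε₁B) - C₂ (ε - ε₂B)) *ᵥ n)
  rw [acousticTensor_apply, LinearMap.add_apply, LinearMap.smul_apply, LinearMap.smul_apply,
    add_mulVec, smul_mulVec, smul_mulVec, sub_mulVec] at ha
  refine ⟨a, ?_⟩
  rw [TractionContinuous, sub_right_comm, add_sub_right_comm, map_sub, map_add, map_smul, map_smul,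
    hC₁.map_symPart, hC₂.map_symPart, sub_mulVec, add_mulVec, smul_mulVec, smul_mulVec,
    sub_eq_iff_eq_add, add_assoc, add_comm (φ • _), ha, add_sub_cancel]

-- The Hill–Mandel condition: tractions that agree do no net work on the strain fluctuation.
theorem TractionContinuous.frob_averageStress (hC₁ : IsStiffness C₁) (hC₂ : IsStiffness C₂)
    (ha : TractionContinuous C₁ C₂ ε₁B ε₂B φ n ε a)
    (H : Matrix (Fin d) (Fin d) ℝ) (b : Fin d → ℝ) :
    frob (averageStress C₁ C₂ ε₁B ε₂B φ n ε a) H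
      = φ * frob (C₁ (ε - (1 - φ) • symPart (vecMulVec a n) - ε₁B))
          (H - (1 - φ) • symPart (vecMulVec b n))
        + (1 - φ) * frob (C₂ (ε + φ • symPart (vecMulVec a n) - ε₂B))
          (H + φ • symPart (vecMulVec b n)) := by
  have work_eq :
      frob (C₁ (ε - (1 - φ) • symPart (vecMulVec a n) - ε₁B)) (symPart (vecMulVec b n))
        = frob (C₂ (ε + φ • symPart (vecMulVec a n) - ε₂B)) (symPart (vecMulVec b n)) := by
    rw [frob_symPart (hC₁.transpose_map _), frob_symPart (hC₂.transpose_map _), frob_vecMulVec,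
      frob_vecMulVec, ha]
  simp only [averageStress, sub_eq_add_neg H, ← neg_smul, frob_add_left, frob_smul_left,
    frob_add_right _ H, frob_smul_right _ _ (symPart _), work_eq]
  ring

theorem dualE_add_add (hC₁ : IsStiffness C₁) (hC₂ : IsStiffness C₂)
    (ha : TractionContinuous C₁ C₂ ε₁B ε₂B φ n ε a)
    (H : Matrix (Fin d) (Fin d) ℝ) (b : Fin d → ℝ) :
    dualE C₁ C₂ ε₁B ε₂B φ n (ε + H) (a + b)
      = dualE C₁ C₂ ε₁B ε₂B φ n ε a + frob (averageStress C₁ C₂ ε₁B ε₂B φ n ε a) H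
        + dualE C₁ C₂ 0 0 φ n H b := by
  have strain₁ : ε + H - (1 - φ) • symPart (vecMulVec (a + b) n)
      = (ε - (1 - φ) • symPart (vecMulVec a n)) + (H - (1 - φ) • symPart (vecMulVec b n)) := by
    rw [add_vecMulVec, symPart_add]; module
  have strain₂ : ε + H + φ • symPart (vecMulVec (a + b) n)
      = (ε + φ • symPart (vecMulVec a n)) + (H + φ • symPart (vecMulVec b n)) := by
    rw [add_vecMulVec, symPart_add]; module
  rw [ha.frob_averageStress hC₁ hC₂ H b]
  simp only [dualE_eq_hookeEnergy]
  rw [strain₁, strain₂, hookeEnergy_add hC₁, hookeEnergy_add hC₂, hookeEnergy_zero,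
    hookeEnergy_zero]
  ring

theorem dualE_zero_nonneg (hC₁ : IsStiffness C₁) (hC₂ : IsStiffness C₂)
    (hφ : φ ∈ Set.Icc (0 : ℝ) 1) (n : Fin d → ℝ) (H : Matrix (Fin d) (Fin d) ℝ)
    (b : Fin d → ℝ) : 0 ≤ dualE C₁ C₂ 0 0 φ n H b :=
  add_nonneg (mul_nonneg hφ.1 (hookeEnergy_nonneg hC₁ _ _))
    (mul_nonneg (sub_nonneg.2 hφ.2) (hookeEnergy_nonneg hC₂ _ _))

theorem dualE_zero_zero_pos (hC₁ : IsStiffness C₁) (hC₂ : IsStiffness C₂)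
    (hφ : φ ∈ Set.Ioo (0 : ℝ) 1) (hn : n ≠ 0) {b : Fin d → ℝ} (hb : b ≠ 0) :
    0 < dualE C₁ C₂ 0 0 φ n 0 b := by
  have hS : symPart (vecMulVec b n) ≠ 0 := symPart_vecMulVec_ne_zero hn hb
  have hφ₂ : 0 < 1 - φ := sub_pos.2 hφ.2
  have factored : dualE C₁ C₂ 0 0 φ n 0 b
      = φ * (1 - φ) / 2 * ((1 - φ) * frob (symPart (vecMulVec b n)) (C₁ (symPart (vecMulVec b n)))
        + φ * frob (symPart (vecMulVec b n)) (C₂ (symPart (vecMulVec b n)))) := by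
    simp only [dualE, sub_zero, zero_sub, zero_add, ← neg_smul, map_smul, frob_smul_left,
      frob_smul_right]
    ring
  have h₁ := hC₁.frob_map_self_pos_of_transpose_eq (transpose_symPart _) hS
  have h₂ := hC₂.frob_map_self_pos_of_transpose_eq (transpose_symPart _) hS
  have hφ₁ := hφ.1
  rw [factored]
  positivity

theorem TractionContinuous.affine_le_dualE (hC₁ : IsStiffness C₁) (hC₂ : IsStiffness C₂)
    (hφ : φ ∈ Set.Icc (0 : ℝ) 1) (ha : TractionContinuous C₁ C₂ ε₁B ε₂B φ n ε a)
    (H : Matrix (Fin d) (Fin d) ℝ) (b : Fin d → ℝ) :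
    dualE C₁ C₂ ε₁B ε₂B φ n ε a + frob (averageStress C₁ C₂ ε₁B ε₂B φ n ε a) H
      ≤ dualE C₁ C₂ ε₁B ε₂B φ n (ε + H) b := by
  have expansion := dualE_add_add hC₁ hC₂ ha H (b - a)
  rw [add_sub_cancel] at expansion
  linarith [dualE_zero_nonneg hC₁ hC₂ hφ n H (b - a)]

theorem TractionContinuous.dualE_lt_dualE (hC₁ : IsStiffness C₁) (hC₂ : IsStiffness C₂)
    (hφ : φ ∈ Set.Ioo (0 : ℝ) 1) (hn : n ≠ 0)
    (ha : TractionContinuous C₁ C₂ ε₁B ε₂B φ n ε a) {b : Fin d → ℝ} (hb : b ≠ a) :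
    dualE C₁ C₂ ε₁B ε₂B φ n ε a < dualE C₁ C₂ ε₁B ε₂B φ n ε b := by
  have expansion := dualE_add_add hC₁ hC₂ ha 0 (b - a)
  rw [add_sub_cancel, add_zero, ← frobCLM_apply, map_zero, add_zero] at expansion
  linarith [dualE_zero_zero_pos hC₁ hC₂ hφ hn (sub_ne_zero.2 hb)]

theorem hasFDerivAt_dualE_left (hC₁ : IsStiffness C₁) (hC₂ : IsStiffness C₂)
    (ε₁B ε₂B : Matrix (Fin d) (Fin d) ℝ) (φ : ℝ) (n : Fin d → ℝ)
    (ε : Matrix (Fin d) (Fin d) ℝ) (a : Fin d → ℝ) :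
    HasFDerivAt (fun ε' => dualE C₁ C₂ ε₁B ε₂B φ n ε' a)
      (frobCLM d (averageStress C₁ C₂ ε₁B ε₂B φ n ε a)) ε := by
  rw [averageStress, map_add, map_smul, map_smul]
  have phase₁ := (hasFDerivAt_comp_sub (x := ε) ((1 - φ) • symPart (vecMulVec a n))).2
    (hasFDerivAt_hookeEnergy hC₁ ε₁B _)
  have phase₂ := (hasFDerivAt_comp_add_right (x := ε) (φ • symPart (vecMulVec a n))).2
    (hasFDerivAt_hookeEnergy hC₂ ε₂B _)
  exact (phase₁.const_mul φ).add (phase₂.const_mul (1 - φ))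

theorem TractionContinuous.hasFDerivAt_relaxedEnergy (hC₁ : IsStiffness C₁)
    (hC₂ : IsStiffness C₂) (hφ : φ ∈ Set.Icc (0 : ℝ) 1)
    (ha : TractionContinuous C₁ C₂ ε₁B ε₂B φ n ε a) :
    HasFDerivAt (relaxedEnergy C₁ C₂ ε₁B ε₂B φ n)
      (frobCLM d (averageStress C₁ C₂ ε₁B ε₂B φ n ε a)) ε :=
  hasFDerivAt_iInf_of_affine_le (ha.affine_le_dualE hC₁ hC₂ hφ)
    (hasFDerivAt_dualE_left hC₁ hC₂ ε₁B ε₂B φ n ε a)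

end DualPhase

theorem relaxed_energy_gradient_is_average_stress_general {d : ℕ}
    {C₁ C₂ : Matrix (Fin d) (Fin d) ℝ →ₗ[ℝ] Matrix (Fin d) (Fin d) ℝ}
    (hC₁ : IsStiffness C₁) (hC₂ : IsStiffness C₂) (ε₁B ε₂B : Matrix (Fin d) (Fin d) ℝ)
    {φ : ℝ} (hφ : φ ∈ Set.Ioo (0 : ℝ) 1) {nh : Fin d → ℝ} (hnh : nh ≠ 0)
    (ε : Matrix (Fin d) (Fin d) ℝ) :
    ∃ astar : Fin d → ℝ,
      (dualE C₁ C₂ ε₁B ε₂B φ nh ε astar = relaxedEnergy C₁ C₂ ε₁B ε₂B φ nh ε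
        ∧ (∀ b, dualE C₁ C₂ ε₁B ε₂B φ nh ε astar ≤ dualE C₁ C₂ ε₁B ε₂B φ nh ε b)
        ∧ (∀ a, (∀ b, dualE C₁ C₂ ε₁B ε₂B φ nh ε a ≤ dualE C₁ C₂ ε₁B ε₂B φ nh ε b)
            → a = astar))
      ∧ DifferentiableAt ℝ (relaxedEnergy C₁ C₂ ε₁B ε₂B φ nh) ε
      ∧ ∀ H, fderiv ℝ (relaxedEnergy C₁ C₂ ε₁B ε₂B φ nh) ε H
          = frob (φ • C₁ (ε - (1 - φ) • symPart (vecMulVec astar nh) - ε₁B)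
              + (1 - φ) • C₂ (ε + φ • symPart (vecMulVec astar nh) - ε₂B)) H := by
  obtain ⟨a, ha⟩ := exists_tractionContinuous hC₁ hC₂ ε₁B ε₂B hφ hnh ε
  have lt_of_ne : ∀ b, b ≠ a →
      dualE C₁ C₂ ε₁B ε₂B φ nh ε a < dualE C₁ C₂ ε₁B ε₂B φ nh ε b :=
    fun b => ha.dualE_lt_dualE hC₁ hC₂ hφ hnh
  have minimal : ∀ b, dualE C₁ C₂ ε₁B ε₂B φ nh ε a ≤ dualE C₁ C₂ ε₁B ε₂B φ nh ε b := by
    intro b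
    obtain rfl | hb := eq_or_ne b a
    exacts [le_rfl, (lt_of_ne b hb).le]
  have attained : IsLeast (Set.range (dualE C₁ C₂ ε₁B ε₂B φ nh ε))
      (dualE C₁ C₂ ε₁B ε₂B φ nh ε a) := ⟨⟨a, rfl⟩, Set.forall_mem_range.2 minimal⟩
  have gradient := ha.hasFDerivAt_relaxedEnergy hC₁ hC₂ (Set.Ioo_subset_Icc_self hφ)
  refine ⟨a, ⟨attained.csInf_eq.symm, minimal, fun b hb => ?_⟩, gradient.differentiableAt,
    fun H => ?_⟩
  · exact by_contra fun hne => (lt_of_ne b hne).not_ge (hb a)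
  · rw [gradient.fderiv]
    rfl

/-- effective stress of the relaxed dual-phase energy is the volume average
of the phase stresses: for each symmetric `ε` the infimum is attained at a unique
`a*(ε)`, `ψ^{rel}` is differentiable, and `Dψ^{rel}(ε) = φ σ₁ + (1−φ) σ₂` with
`σ₁ = C₁(ε₁ − ε₁^B)`, `σ₂ = C₂(ε₂ − ε₂^B)`, `ε₁ = ε − (1−φ)(a* ⊗ n̂)ˢʸᵐ`,
`ε₂ = ε + φ (a* ⊗ n̂)ˢʸᵐ`. -/
theorem relaxed_energy_gradient_is_average_stress {d : ℕ}
    (C₁ C₂ : Matrix (Fin d) (Fin d) ℝ →ₗ[ℝ] Matrix (Fin d) (Fin d) ℝ)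
    (hC₁ : IsStiffness C₁) (hC₂ : IsStiffness C₂)
    (ε₁B ε₂B : Matrix (Fin d) (Fin d) ℝ) (hε₁B : ε₁Bᵀ = ε₁B) (hε₂B : ε₂Bᵀ = ε₂B)
    (φ : ℝ) (hφ : φ ∈ Set.Ioo (0 : ℝ) 1)
    (nh : Fin d → ℝ) (hnh : nh ⬝ᵥ nh = 1) :
    ∀ ε : Matrix (Fin d) (Fin d) ℝ, εᵀ = ε →
      ∃ astar : Fin d → ℝ,
        (dualE C₁ C₂ ε₁B ε₂B φ nh ε astar = relaxedEnergy C₁ C₂ ε₁B ε₂B φ nh ε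
          ∧ (∀ b, dualE C₁ C₂ ε₁B ε₂B φ nh ε astar ≤ dualE C₁ C₂ ε₁B ε₂B φ nh ε b)
          ∧ (∀ a, (∀ b, dualE C₁ C₂ ε₁B ε₂B φ nh ε a ≤ dualE C₁ C₂ ε₁B ε₂B φ nh ε b)
              → a = astar))
        ∧ DifferentiableAt ℝ (relaxedEnergy C₁ C₂ ε₁B ε₂B φ nh) ε
        ∧ ∀ H, fderiv ℝ (relaxedEnergy C₁ C₂ ε₁B ε₂B φ nh) ε H
            = frob (φ • C₁ (ε - (1 - φ) • symPart (vecMulVec astar nh) - ε₁B)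
                + (1 - φ) • C₂ (ε + φ • symPart (vecMulVec astar nh) - ε₂B)) H := by
  exact fun ε _ => relaxed_energy_gradient_is_average_stress_general hC₁ hC₂ ε₁B ε₂B hφ
    (by rintro rfl; simp at hnh) ε
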